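/- Let s_n = |SEP(n)|. Then s_n ~ (1/(2^{3/4}√π))·(3 − 2√2)^{−n+1/2}·n^{−3/2} as n→∞; that is, lim_{n→∞} s_n · 2^{3/4}√π · n^{3/2} · (3 − 2√2)^{n−1/2} = 1. -/

import Mathlib

open Finset Filter Real
open scoped Classical

/-- `σ` contains the pattern `τ` (a permutation of `Fin k` given as a function). -/
def ContainsPattern {n k : ℕ} (σ : Equiv.Perm (Fin n)) (τ : Fin k → Fin k) : Prop :=
  ∃ f : Fin k → Fin n, StrictMono f ∧ ∀ a b : Fin k, τ a < τ b ↔ σ (f a) < σ (f b)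

/-- A permutation is separable iff it avoids the patterns 2413 and 3142. -/
def Separable {n : ℕ} (σ : Equiv.Perm (Fin n)) : Prop :=
  ¬ ContainsPattern σ (![1, 3, 0, 2] : Fin 4 → Fin 4) ∧
  ¬ ContainsPattern σ (![2, 0, 3, 1] : Fin 4 → Fin 4)

/-- The set of separable permutations of `[n]`. -/
noncomputable def SEP (n : ℕ) : Finset (Equiv.Perm (Fin n)) :=
  Finset.univ.filter fun σ => Separable σ

/-- `IsAltSeq σ s l` : `l` is a strictly increasing list of indices along which the values of `σ`
alternate, starting with an ascent if `s = true` and starting with a descent if `s = false`. -/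
def IsAltSeq {n : ℕ} (σ : Equiv.Perm (Fin n)) (s : Bool) (l : List (Fin n)) : Prop :=
  l.Chain' (· < ·) ∧
  ∀ j : ℕ, ∀ hj : j + 1 < l.length,
    if decide (j % 2 = 0) = s then
      σ (l.get ⟨j, Nat.lt_of_succ_lt hj⟩) < σ (l.get ⟨j + 1, hj⟩)
    else
      σ (l.get ⟨j + 1, hj⟩) < σ (l.get ⟨j, Nat.lt_of_succ_lt hj⟩)

/-- The length of the longest alternating subsequence of `σ` of type `(s, e)`, where
`true` stands for ascent and `false` for descent.  An alternating subsequence starting with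
an ascent ends with a descent iff its length is odd (and similarly in the other cases), so the
type is encoded by the parity constraint; a singleton counts as a subsequence of types
`(+,-)` and `(-,+)` but not of types `(+,+)` and `(-,-)`. -/
noncomputable def altTypeLen {n : ℕ} (σ : Equiv.Perm (Fin n)) (s e : Bool) : ℕ :=
  sSup {k | ∃ l : List (Fin n), IsAltSeq σ s l ∧ l.length = k ∧
    k % 2 = (if s = e then 0 else 1)}

/-- The length `Aₙ(σ)` of the longest alternating subsequence of `σ`. -/
noncomputable def altLen {n : ℕ} (σ : Equiv.Perm (Fin n)) : ℕ :=
  sSup {k | ∃ l : List (Fin n), (IsAltSeq σ true l ∨ IsAltSeq σ false l) ∧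
    l.length = k ∧ 1 ≤ k}

/-- Expectation with respect to the uniform probability measure on `SEP n`. -/
noncomputable def sepExp (n : ℕ) (f : Equiv.Perm (Fin n) → ℝ) : ℝ :=
  (∑ σ ∈ SEP n, f σ) / (SEP n).card

/-- Variance with respect to the uniform probability measure on `SEP n`. -/
noncomputable def sepVar (n : ℕ) (f : Equiv.Perm (Fin n) → ℝ) : ℝ :=
  sepExp n (fun σ => (f σ - sepExp n f) ^ 2)

/-- `B₁^{+,n}(σ)`: the length of the first indecomposable block (0-indexed positions). -/
noncomputable def Bplus {n : ℕ} (σ : Equiv.Perm (Fin n)) : ℕ :=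
  sInf {j | 1 ≤ j ∧ ∀ i : Fin n, (i : ℕ) < j → (σ i : ℕ) < j}

/-- `B₁^{-,n}(σ)`: the length of the first skew indecomposable block (0-indexed positions). -/
noncomputable def Bminus {n : ℕ} (σ : Equiv.Perm (Fin n)) : ℕ :=
  sInf {j | 1 ≤ j ∧ ∀ i : Fin n, (i : ℕ) < j → n - j ≤ (σ i : ℕ)}

/-- Expectation over indecomposable separable permutations of `[n]`, i.e. the conditional
expectation under the uniform measure on `SEP n` given `{B₁^{+,n} = n}`. -/
noncomputable def indecExp (n : ℕ) (f : Equiv.Perm (Fin n) → ℝ) : ℝ :=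
  (∑ σ ∈ (SEP n).filter (fun σ => Bplus σ = n), f σ) /
    ((SEP n).filter (fun σ => Bplus σ = n)).card

theorem containsPattern_2413_iff {n : ℕ} {σ : Equiv.Perm (Fin n)} :
    ContainsPattern σ (![1, 3, 0, 2] : Fin 4 → Fin 4) ↔
      ∃ a b c d, a < b ∧ b < c ∧ c < d ∧ σ c < σ a ∧ σ a < σ d ∧ σ d < σ b := by
  constructor
  · rintro ⟨f, hf, h⟩
    exact ⟨f 0, f 1, f 2, f 3, hf (by decide), hf (by decide), hf (by decide),
      (h 2 0).1 (by decide), (h 0 3).1 (by decide), (h 3 1).1 (by decide)⟩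
  · rintro ⟨a, b, c, d, hab, hbc, hcd, h1, h2, h3⟩
    refine ⟨![a, b, c, d], ?_, ?_⟩
    · rw [Fin.strictMono_iff_lt_succ]
      intro i
      fin_cases i <;> simpa
    · intro x y
      fin_cases x <;> fin_cases y <;> simp <;> order

theorem containsPattern_3142_iff {n : ℕ} {σ : Equiv.Perm (Fin n)} :
    ContainsPattern σ (![2, 0, 3, 1] : Fin 4 → Fin 4) ↔
      ∃ a b c d, a < b ∧ b < c ∧ c < d ∧ σ b < σ d ∧ σ d < σ a ∧ σ a < σ c := by
  constructor
  · rintro ⟨f, hf, h⟩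
    exact ⟨f 0, f 1, f 2, f 3, hf (by decide), hf (by decide), hf (by decide),
      (h 1 3).1 (by decide), (h 3 0).1 (by decide), (h 0 2).1 (by decide)⟩
  · rintro ⟨a, b, c, d, hab, hbc, hcd, h1, h2, h3⟩
    refine ⟨![a, b, c, d], ?_, ?_⟩
    · rw [Fin.strictMono_iff_lt_succ]
      intro i
      fin_cases i <;> simpa
    · intro x y
      fin_cases x <;> fin_cases y <;> simp <;> order

/-- If the prefix of length `m` of a word without pattern `3142` splits into a low part followed
by a high part, then the prefix of length `m + 1` splits as well, in one of the two ways. -/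
theorem exists_split_succ {β : Type*} [LinearOrder β] {n m j : ℕ} (f : Fin n → β)
    (hf : Function.Injective f)
    (h : ∀ a b c d, a < b → b < c → c < d → f b < f d → f d < f a → ¬ f a < f c)
    (hm : m < n) (hj : 0 < j) (hjm : j < m)
    (hs : ∀ a b : Fin n, (a : ℕ) < j → j ≤ b → (b : ℕ) < m → f a < f b) :
    ∃ i, 0 < i ∧ i < m + 1 ∧
      ((∀ a b : Fin n, (a : ℕ) < i → i ≤ b → (b : ℕ) < m + 1 → f a < f b) ∨
        (∀ a b : Fin n, (a : ℕ) < i → i ≤ b → (b : ℕ) < m + 1 → f b < f a)) := by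
  obtain ⟨x, hx⟩ : ∃ x : Fin n, (x : ℕ) = m := ⟨⟨m, hm⟩, rfl⟩
  have hlast : ∀ b : Fin n, (b : ℕ) < m + 1 → (b : ℕ) < m ∨ b = x := by
    intro b hb
    rcases Nat.lt_succ_iff_lt_or_eq.1 hb with h | h
    · exact .inl h
    · exact .inr (Fin.ext (by omega))
  by_cases hlow : ∀ a : Fin n, (a : ℕ) < j → f a < f x
  · refine ⟨j, hj, by omega, .inl fun a b ha hb hbm => ?_⟩
    rcases hlast b hbm with hb' | rfl
    exacts [hs a b ha hb hb', hlow a ha]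
  by_cases hhigh : ∀ a : Fin n, (a : ℕ) < m → f x < f a
  · refine ⟨m, by omega, by omega, .inr fun a b ha hb hbm => ?_⟩
    rcases hlast b hbm with hb' | rfl
    exacts [absurd hb' (by omega), hhigh a ha]
  push Not at hlow hhigh
  obtain ⟨l, ⟨hxl, hlj⟩, hmin⟩ := wellFounded_lt.has_min
    {l : Fin n | f x < f l ∧ (l : ℕ) < j} (by
      obtain ⟨l, hl, hxl⟩ := hlow
      exact ⟨l, lt_of_le_of_ne hxl (hf.ne (by rintro rfl; omega)), hl⟩)
  have hj' : ∀ b : Fin n, j ≤ b → (b : ℕ) < m → f x < f b := fun b hb hbm =>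
    hxl.trans (hs l b hlj hb hbm)
  have hlt : ∀ a : Fin n, a < l → f a < f x := by
    intro a ha
    refine lt_of_le_of_ne (not_lt.1 fun h => hmin a ⟨h, by omega⟩ ha) (hf.ne ?_)
    rintro rfl
    omega
  have hgt : ∀ b : Fin n, l ≤ b → (b : ℕ) < m → f x < f b := by
    intro b hb hbm
    by_cases hbj : j ≤ (b : ℕ)
    · exact hj' b hbj hbm
    rcases hb.eq_or_lt with rfl | hb
    · exact hxl
    by_contra hbx
    have hbx : f b < f x := lt_of_le_of_ne (not_lt.1 hbx) (hf.ne (by rintro rfl; omega))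
    exact h l b ⟨j, by omega⟩ x hb (by rw [Fin.lt_def]; simpa using hbj)
      (by rw [Fin.lt_def]; simpa [hx] using hjm) hbx hxl
      (hs _ _ hlj le_rfl hjm)
  have hl0 : 0 < (l : ℕ) := by
    obtain ⟨a, ham, hax⟩ := hhigh
    by_contra hl
    exact absurd (hgt a (by rw [Fin.le_def]; omega) ham) (not_lt.2 hax)
  refine ⟨l, hl0, by omega, .inl fun a b ha hb hbm => ?_⟩
  rcases hlast b hbm with hb' | rfl
  · exact (hlt a ha).trans (hgt b hb hb')
  · exact hlt a ha

/-- Position `j` splits `σ` into a prefix of small values and a suffix of large values. -/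
def IsCut {n : ℕ} (σ : Equiv.Perm (Fin n)) (j : ℕ) : Prop :=
  ∀ a b : Fin n, (a : ℕ) < j → j ≤ b → σ a < σ b

/-- Position `j` splits `σ` into a prefix of large values and a suffix of small values. -/
def IsSkewCut {n : ℕ} (σ : Equiv.Perm (Fin n)) (j : ℕ) : Prop :=
  ∀ a b : Fin n, (a : ℕ) < j → j ≤ b → σ b < σ a

theorem Separable.exists_cut {n : ℕ} {σ : Equiv.Perm (Fin n)} (hσ : Separable σ) (hn : 2 ≤ n) :
    ∃ j, 0 < j ∧ j < n ∧ (IsCut σ j ∨ IsSkewCut σ j) := by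
  obtain ⟨h1, h2⟩ := hσ
  rw [containsPattern_2413_iff] at h1
  rw [containsPattern_3142_iff] at h2
  push Not at h1 h2
  have key : ∀ m, 2 ≤ m → m ≤ n → ∃ j, 0 < j ∧ j < m ∧
      ((∀ a b : Fin n, (a : ℕ) < j → j ≤ b → (b : ℕ) < m → σ a < σ b) ∨
        (∀ a b : Fin n, (a : ℕ) < j → j ≤ b → (b : ℕ) < m → σ b < σ a)) := by
    intro m hm
    induction m, hm using Nat.le_induction with
    | base =>
      intro _
      have h01 : σ ⟨0, by omega⟩ ≠ σ ⟨1, by omega⟩ := σ.injective.ne (by simp)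
      refine ⟨1, by omega, by omega, h01.lt_or_gt.imp ?_ ?_⟩ <;>
      · intro h a b ha hb hb'
        have ha0 : a = ⟨0, by omega⟩ := Fin.ext (by simpa using ha)
        have hb1 : b = ⟨1, by omega⟩ := Fin.ext (by simp; omega)
        rwa [ha0, hb1]
    | succ m hm ih =>
      intro hmn
      obtain ⟨j, hj, hjm, hs | hs⟩ := ih (by omega)
      · exact exists_split_succ σ σ.injective
          (fun a b c d h h' h'' h3 h4 => not_lt.2 (h2 a b c d h h' h'' h3 h4)) hmn hj hjm hs
      · obtain ⟨i, hi, him, h⟩ := exists_split_succ (OrderDual.toDual ∘ σ) σ.injective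
          (fun a b c d h h' h'' h3 h4 h5 =>
            (h1 a b c d h h' h'' h5 h4).not_gt h3) hmn hj hjm hs
        exact ⟨i, hi, him, h.symm⟩
  obtain ⟨j, hj, hjn, h⟩ := key n hn le_rfl
  exact ⟨j, hj, hjn, h.imp (fun h a b ha hb => h a b ha hb b.2)
    (fun h a b ha hb => h a b ha hb b.2)⟩

/-- The position of the first cut of `σ`; it is `n` when `σ` is sum indecomposable. -/
noncomputable def firstCut {n : ℕ} (σ : Equiv.Perm (Fin n)) : ℕ :=
  sInf {j | 0 < j ∧ IsCut σ j}

theorem firstCut_eq_iff {n j : ℕ} {σ : Equiv.Perm (Fin n)} :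
    firstCut σ = j ↔ 0 < j ∧ IsCut σ j ∧ ∀ i, 0 < i → i < j → ¬ IsCut σ i := by
  have hne : {j | 0 < j ∧ IsCut σ j}.Nonempty :=
    ⟨n + 1, by omega, fun a b _ hb => absurd b.2 (by omega)⟩
  constructor
  · rintro rfl
    have := Nat.sInf_mem hne
    exact ⟨this.1, this.2, fun i hi hij h => Nat.notMem_of_lt_sInf hij ⟨hi, h⟩⟩
  · rintro ⟨hj, hcut, hmin⟩
    refine le_antisymm (Nat.sInf_le ⟨hj, hcut⟩) (le_csInf hne fun i hi => ?_)
    by_contra hij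
    exact hmin i hi.1 (not_le.1 hij) hi.2

theorem firstCut_pos {n : ℕ} (σ : Equiv.Perm (Fin n)) : 0 < firstCut σ :=
  (firstCut_eq_iff.1 rfl).1

theorem isCut_self {n : ℕ} (σ : Equiv.Perm (Fin n)) : IsCut σ n :=
  fun _ b _ hb => absurd b.2 (by omega)

theorem firstCut_le {n : ℕ} (σ : Equiv.Perm (Fin n)) (hn : 0 < n) : firstCut σ ≤ n :=
  Nat.sInf_le ⟨hn, isCut_self σ⟩

theorem firstCut_eq_self_iff {n : ℕ} (hn : 0 < n) {σ : Equiv.Perm (Fin n)} :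
    firstCut σ = n ↔ ∀ i, 0 < i → i < n → ¬ IsCut σ i := by
  simp [firstCut_eq_iff, hn, isCut_self]

/-- The direct sum of two permutations. -/
def directSum {j k : ℕ} (α : Equiv.Perm (Fin j)) (β : Equiv.Perm (Fin k)) :
    Equiv.Perm (Fin (j + k)) :=
  finSumFinEquiv.permCongr (Equiv.sumCongr α β)

section DirectSum

variable {j k : ℕ} {α : Equiv.Perm (Fin j)} {β : Equiv.Perm (Fin k)}

@[simp] theorem directSum_castAdd (i : Fin j) :
    directSum α β (Fin.castAdd k i) = Fin.castAdd k (α i) := by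
  simp [directSum]

@[simp] theorem directSum_natAdd (i : Fin k) :
    directSum α β (Fin.natAdd j i) = Fin.natAdd j (β i) := by
  simp [directSum]

theorem directSum_injective :
    Function.Injective fun p : Equiv.Perm (Fin j) × Equiv.Perm (Fin k) =>
      directSum p.1 p.2 := by
  rintro ⟨α, β⟩ ⟨α', β'⟩ h
  have h := Equiv.ext_iff.1 h
  refine Prod.ext (Equiv.ext fun i => ?_) (Equiv.ext fun i => ?_)
  · simpa using h (Fin.castAdd k i)
  · simpa using h (Fin.natAdd j i)

theorem containsPattern_2413_directSum_iff :
    ContainsPattern (directSum α β) (![1, 3, 0, 2] : Fin 4 → Fin 4) ↔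
      ContainsPattern α (![1, 3, 0, 2] : Fin 4 → Fin 4) ∨
        ContainsPattern β (![1, 3, 0, 2] : Fin 4 → Fin 4) := by
  simp only [containsPattern_2413_iff]
  constructor
  · rintro ⟨a, b, c, d, h⟩
    induction a using Fin.addCases <;> induction b using Fin.addCases <;>
    induction c using Fin.addCases <;> induction d using Fin.addCases <;>
    simp only [directSum_castAdd, directSum_natAdd, Fin.lt_def, Fin.val_castAdd,
      Fin.val_natAdd, add_lt_add_iff_left] at h <;>
    first
    | exact .inl ⟨_, _, _, _, h⟩
    | exact .inr ⟨_, _, _, _, h⟩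
    | omega
  · rintro (⟨a, b, c, d, h⟩ | ⟨a, b, c, d, h⟩)
    · exact ⟨Fin.castAdd k a, Fin.castAdd k b, Fin.castAdd k c, Fin.castAdd k d,
        by simpa only [directSum_castAdd, directSum_natAdd, Fin.lt_def, Fin.val_castAdd,
          Fin.val_natAdd, add_lt_add_iff_left] using h⟩
    · exact ⟨Fin.natAdd j a, Fin.natAdd j b, Fin.natAdd j c, Fin.natAdd j d,
        by simpa only [directSum_castAdd, directSum_natAdd, Fin.lt_def, Fin.val_castAdd,
          Fin.val_natAdd, add_lt_add_iff_left] using h⟩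

theorem containsPattern_3142_directSum_iff :
    ContainsPattern (directSum α β) (![2, 0, 3, 1] : Fin 4 → Fin 4) ↔
      ContainsPattern α (![2, 0, 3, 1] : Fin 4 → Fin 4) ∨
        ContainsPattern β (![2, 0, 3, 1] : Fin 4 → Fin 4) := by
  simp only [containsPattern_3142_iff]
  constructor
  · rintro ⟨a, b, c, d, h⟩
    induction a using Fin.addCases <;> induction b using Fin.addCases <;>
    induction c using Fin.addCases <;> induction d using Fin.addCases <;>
    simp only [directSum_castAdd, directSum_natAdd, Fin.lt_def, Fin.val_castAdd,
      Fin.val_natAdd, add_lt_add_iff_left] at h <;>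
    first
    | exact .inl ⟨_, _, _, _, h⟩
    | exact .inr ⟨_, _, _, _, h⟩
    | omega
  · rintro (⟨a, b, c, d, h⟩ | ⟨a, b, c, d, h⟩)
    · exact ⟨Fin.castAdd k a, Fin.castAdd k b, Fin.castAdd k c, Fin.castAdd k d,
        by simpa only [directSum_castAdd, directSum_natAdd, Fin.lt_def, Fin.val_castAdd,
          Fin.val_natAdd, add_lt_add_iff_left] using h⟩
    · exact ⟨Fin.natAdd j a, Fin.natAdd j b, Fin.natAdd j c, Fin.natAdd j d,
        by simpa only [directSum_castAdd, directSum_natAdd, Fin.lt_def, Fin.val_castAdd,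
          Fin.val_natAdd, add_lt_add_iff_left] using h⟩

theorem separable_directSum_iff :
    Separable (directSum α β) ↔ Separable α ∧ Separable β := by
  simp only [Separable, containsPattern_2413_directSum_iff, containsPattern_3142_directSum_iff]
  tauto

theorem isCut_directSum_self : IsCut (directSum α β) j := by
  intro a b ha hb
  induction a using Fin.addCases <;> induction b using Fin.addCases <;>
  simp only [directSum_castAdd, directSum_natAdd, Fin.lt_def, Fin.val_castAdd,
    Fin.val_natAdd] at ha hb ⊢ <;> omega

theorem isCut_directSum_iff {i : ℕ} (hi : i ≤ j) :
    IsCut (directSum α β) i ↔ IsCut α i := by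
  constructor
  · intro h a b ha hb
    simpa only [directSum_castAdd, Fin.lt_def, Fin.val_castAdd] using
      h (Fin.castAdd k a) (Fin.castAdd k b) (by simpa) (by simpa)
  · intro h a b ha hb
    by_cases hbj : j ≤ (b : ℕ)
    · exact isCut_directSum_self a b (by omega) hbj
    · induction a using Fin.addCases with
      | right a => exact absurd ha (by simp; omega)
      | left a =>
        induction b using Fin.addCases with
        | right b => exact absurd hbj (by simp)
        | left b =>
          simpa only [directSum_castAdd, Fin.lt_def, Fin.val_castAdd] using h a b ha hb

theorem firstCut_directSum_eq_iff (hj : 0 < j) :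
    firstCut (directSum α β) = j ↔ firstCut α = j := by
  rw [firstCut_eq_iff, firstCut_eq_self_iff hj]
  simp only [hj, isCut_directSum_self, true_and]
  exact forall₃_congr fun i _ hij => not_congr (isCut_directSum_iff hij.le)

end DirectSum

theorem IsCut.val_lt {j k : ℕ} {σ : Equiv.Perm (Fin (j + k))} (h : IsCut σ j)
    {a : Fin (j + k)} (ha : (a : ℕ) < j) : (σ a : ℕ) < j := by
  by_contra hj
  have : #(univ : Finset (Fin k)) ≤ #(Ioi (σ a)) :=
    card_le_card_of_injOn (fun b => σ (Fin.natAdd j b))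
      (fun b _ => by simpa using h a (Fin.natAdd j b) ha (by simp))
      (fun b _ c _ hbc => by simpa using hbc)
  simp at this
  omega

theorem IsCut.exists_directSum {j k : ℕ} {σ : Equiv.Perm (Fin (j + k))} (h : IsCut σ j) :
    ∃ α β, directSum α β = σ := by
  obtain ⟨⟨α, β⟩, h⟩ := Equiv.Perm.mem_sumCongrHom_range_of_perm_mapsTo_inl
    (σ := finSumFinEquiv.symm.permCongr σ) (by
      rintro _ ⟨i, rfl⟩
      have := h.val_lt (a := Fin.castAdd k i) (by simp)
      refine ⟨⟨σ (Fin.castAdd k i), this⟩, ?_⟩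
      rw [Equiv.permCongr_apply, Equiv.eq_symm_apply]
      ext
      simp)
  refine ⟨α, β, ?_⟩
  rw [Equiv.Perm.sumCongrHom_apply] at h
  rw [directSum, ← Equiv.permCongr_symm] at *
  rw [Equiv.eq_symm_apply] at h
  exact h

/-- The number of sum indecomposable separable permutations of `[n]`. -/
noncomputable def indecCard (n : ℕ) : ℕ := #{σ ∈ SEP n | firstCut σ = n}

theorem card_filter_firstCut_eq (j k : ℕ) (hj : 0 < j) :
    #{σ ∈ SEP (j + k) | firstCut σ = j} = indecCard j * #(SEP k) := by
  rw [indecCard, ← card_product]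
  symm
  refine card_bij (fun p _ => directSum p.1 p.2) ?_ (fun p _ q _ h => directSum_injective h) ?_
  · rintro ⟨α, β⟩ h
    simp_all [SEP, separable_directSum_iff, firstCut_directSum_eq_iff]
  · intro σ h
    simp only [SEP, mem_filter, mem_univ, true_and] at h
    obtain ⟨α, β, rfl⟩ := (firstCut_eq_iff.1 h.2).2.1.exists_directSum
    rw [separable_directSum_iff, firstCut_directSum_eq_iff hj] at h
    exact ⟨(α, β), by simp [SEP, h], rfl⟩

theorem indecCard_zero : indecCard 0 = 0 := by
  simp only [indecCard, card_eq_zero, filter_eq_empty_iff]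
  exact fun σ _ => (firstCut_pos σ).ne'

theorem card_SEP_eq_sum (n : ℕ) (hn : 0 < n) :
    #(SEP n) = ∑ p ∈ antidiagonal n, indecCard p.1 * #(SEP p.2) := by
  rw [card_eq_sum_card_fiberwise (f := firstCut) (t := range (n + 1))
    (fun σ _ => by simpa [Nat.lt_succ_iff] using firstCut_le σ hn),
    Nat.sum_antidiagonal_eq_sum_range_succ (fun j k => indecCard j * #(SEP k))]
  refine sum_congr rfl fun j hj => ?_
  rcases Nat.eq_zero_or_pos j with rfl | hj0
  · simp [indecCard_zero, (firstCut_pos _).ne']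
  · obtain ⟨k, rfl⟩ := Nat.exists_eq_add_of_le (Nat.lt_succ_iff.1 (mem_range.1 hj))
    rw [card_filter_firstCut_eq j k hj0, Nat.add_sub_cancel_left]

section Complement

variable {n : ℕ} {σ : Equiv.Perm (Fin n)}

theorem separable_trans_revPerm_iff : Separable (σ.trans Fin.revPerm) ↔ Separable σ := by
  rw [Separable, Separable, and_comm]
  simp only [containsPattern_2413_iff, containsPattern_3142_iff, Equiv.trans_apply,
    Fin.revPerm_apply, Fin.rev_lt_rev]
  refine and_congr (not_congr ?_) (not_congr ?_) <;>
  refine exists₄_congr fun a b c d => by tauto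

theorem isCut_trans_revPerm_iff {i : ℕ} :
    IsCut (σ.trans Fin.revPerm) i ↔ IsSkewCut σ i := by
  simp [IsCut, IsSkewCut]

theorem IsCut.not_isSkewCut {i j : ℕ} (h : IsCut σ i) (hi : 0 < i) (hin : i < n)
    (hj : 0 < j) (hjn : j < n) : ¬ IsSkewCut σ j := fun h' =>
  (h ⟨0, by omega⟩ ⟨n - 1, by omega⟩ hi (by simp; omega)).not_gt
    (h' ⟨0, by omega⟩ ⟨n - 1, by omega⟩ hj (by simp; omega))

theorem Separable.firstCut_trans_revPerm_eq_iff (hσ : Separable σ) (hn : 2 ≤ n) :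
    firstCut (σ.trans Fin.revPerm) = n ↔ firstCut σ ≠ n := by
  rw [ne_eq, firstCut_eq_self_iff (by omega), firstCut_eq_self_iff (by omega)]
  simp only [isCut_trans_revPerm_iff]
  push Not
  constructor
  · intro h
    obtain ⟨j, hj, hjn, hc | hc⟩ := hσ.exists_cut hn
    exacts [⟨j, hj, hjn, hc⟩, absurd hc (h j hj hjn)]
  · rintro ⟨i, hi, hin, hc⟩ j hj hjn
    exact hc.not_isSkewCut hi hin hj hjn

end Complement

theorem card_SEP_eq_two_mul (n : ℕ) (hn : 2 ≤ n) : #(SEP n) = 2 * indecCard n := by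
  rw [← card_filter_add_card_filter_not (s := SEP n) (fun σ => firstCut σ = n), two_mul,
    indecCard]
  congr 1
  refine card_bij (fun σ _ => σ.trans Fin.revPerm) ?_
    (fun σ _ τ _ h => by simpa [Equiv.ext_iff] using h) ?_
  · intro σ h
    simp only [SEP, mem_filter, mem_univ, true_and] at h ⊢
    exact ⟨separable_trans_revPerm_iff.2 h.1, (h.1.firstCut_trans_revPerm_eq_iff hn).2 h.2⟩
  · intro σ h
    simp only [SEP, mem_filter, mem_univ, true_and] at h
    have hσ : (σ.trans Fin.revPerm).trans Fin.revPerm = σ := by ext; simp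
    refine ⟨σ.trans Fin.revPerm, ?_, hσ⟩
    have hs := separable_trans_revPerm_iff.2 h.1
    simp only [SEP, mem_filter, mem_univ, true_and]
    refine ⟨hs, ?_⟩
    rw [← ne_eq, ← hs.firstCut_trans_revPerm_eq_iff hn, hσ]
    exact h.2

theorem card_SEP_of_le_one {n : ℕ} (hn : n ≤ 1) : #(SEP n) = 1 := by
  have : Subsingleton (Fin n) := ⟨fun a b => Fin.ext (by omega)⟩
  have h : SEP n = univ := by
    refine filter_true_of_mem fun σ _ => ?_
    simp only [Separable, containsPattern_2413_iff, containsPattern_3142_iff]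
    constructor <;>
    · rintro ⟨a, b, c, d, h, -⟩
      exact absurd (Subsingleton.elim a b) h.ne
  rw [h, card_univ, Fintype.card_perm, Fintype.card_fin]
  interval_cases n <;> rfl

theorem indecCard_one : indecCard 1 = 1 := by
  have := card_SEP_eq_sum 1 one_pos
  simpa [card_SEP_of_le_one, Nat.antidiagonal_succ, indecCard_zero] using this.symm

open PowerSeries in
/-- The generating function of the separable permutations solves a quadratic equation. -/
theorem sq_genFun_SEP :
    (3 - X - 2 * PowerSeries.mk fun n => (#(SEP n) : ℝ)) ^ 2 = 1 - 6 * X + X ^ 2 := by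
  set S : ℝ⟦X⟧ := PowerSeries.mk fun n => (#(SEP n) : ℝ) with hS
  set Q : ℝ⟦X⟧ := PowerSeries.mk fun n => (indecCard n : ℝ) with hQ
  have h1 : S = 1 + Q * S := by
    ext n
    rcases Nat.eq_zero_or_pos n with rfl | hn
    · simp [hS, hQ, card_SEP_of_le_one, indecCard_zero]
    · simp [hS, hQ, coeff_mul, coeff_one, hn.ne', card_SEP_eq_sum n hn]
  have h2 : S = 1 + 2 * Q - X := by
    ext n
    rw [two_mul]
    rcases Nat.lt_or_ge n 2 with hn | hn
    · interval_cases n <;>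
      simp [hS, hQ, card_SEP_of_le_one, coeff_one, coeff_X, indecCard_zero, indecCard_one]
    · simp [hS, hQ, coeff_one, coeff_X, show n ≠ 0 by omega, show n ≠ 1 by omega,
        card_SEP_eq_two_mul n hn, two_mul]
  linear_combination (-8) * h1 + 4 * S * h2

/-- The coefficients of the power series of `√(1 - x)`. -/
noncomputable def sqrtCoeff : ℕ → ℝ
  | 0 => 1
  | n + 1 => -(catalan n / (2 * 4 ^ n))

open PowerSeries in
theorem sq_mk_sqrtCoeff : (PowerSeries.mk sqrtCoeff) ^ 2 = 1 - X := by
  set K : ℝ⟦X⟧ := rescale (1 / 4) (catalanSeries.map (Nat.castRingHom ℝ)) with hK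
  have h1 : K = K ^ 2 * (C (1 / 4) * X) + 1 := by
    have := congrArg (fun f => rescale (1 / 4 : ℝ) (f.map (Nat.castRingHom ℝ)))
      catalanSeries_sq_mul_X_add_one
    simpa [hK, rescale_X] using this.symm
  have h2 : PowerSeries.mk sqrtCoeff = 1 - C (1 / 2) * X * K := by
    ext n
    cases n with
    | zero => simp [sqrtCoeff]
    | succ n =>
      rw [mul_assoc, map_sub, coeff_C_mul, coeff_succ_X_mul]
      simp [hK, sqrtCoeff, coeff_one]
      ring
  have h3 : (C (1 / 2) : ℝ⟦X⟧) ^ 2 = C (1 / 4) := by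
    rw [← map_pow]; norm_num
  have h4 : (C (1 / 2) : ℝ⟦X⟧) * 2 = 1 := by
    rw [show (2 : ℝ⟦X⟧) = C 2 from (map_ofNat C 2).symm, ← map_mul]; norm_num
  rw [h2]
  linear_combination X ^ 2 * K ^ 2 * h3 - X * h1 - X * K * h4

theorem abs_sqrtCoeff_succ (n : ℕ) : |sqrtCoeff (n + 1)| = catalan n / (2 * 4 ^ n) := by
  rw [sqrtCoeff, abs_neg, abs_of_nonneg (by positivity)]

theorem abs_sqrtCoeff_succ_le (n : ℕ) : |sqrtCoeff (n + 1)| ≤ 1 / 2 := by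
  rw [abs_sqrtCoeff_succ, div_le_iff₀ (by positivity)]
  have h1 : catalan n ≤ 4 ^ n := by
    have h := succ_mul_catalan_eq_centralBinom n
    have h' : n.centralBinom ≤ 4 ^ n := by
      rw [Nat.centralBinom, show (4 : ℕ) = 2 ^ 2 by norm_num, ← pow_mul]
      exact Nat.choose_le_two_pow _ _
    nlinarith [Nat.zero_le (n * catalan n)]
  have : (catalan n : ℝ) ≤ 4 ^ n := by exact_mod_cast h1
  linarith

theorem abs_sqrtCoeff_le (n : ℕ) : |sqrtCoeff n| ≤ 1 := by
  cases n with
  | zero => simp [sqrtCoeff]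
  | succ n => linarith [abs_sqrtCoeff_succ_le n]

theorem abs_sqrtCoeff_le_four_mul_succ (n : ℕ) :
    |sqrtCoeff n| ≤ 4 * |sqrtCoeff (n + 1)| := by
  cases n with
  | zero => rw [abs_sqrtCoeff_succ]; simp [sqrtCoeff]; norm_num
  | succ n =>
    rw [abs_sqrtCoeff_succ, abs_sqrtCoeff_succ]
    have h : (catalan n : ℝ) ≤ catalan (n + 1) := by
      norm_cast
      rw [catalan_succ]
      refine le_trans ?_ (single_le_sum (fun _ _ => Nat.zero_le _) (mem_univ (Fin.last n)))
      simp
    rw [pow_succ]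
    field_simp
    linarith

theorem abs_sqrtCoeff_le_four_pow_mul (n k : ℕ) :
    |sqrtCoeff n| ≤ 4 ^ k * |sqrtCoeff (n + k)| := by
  induction k with
  | zero => simp
  | succ k ih =>
    calc _ ≤ _ := ih
      _ ≤ 4 ^ k * (4 * |sqrtCoeff (n + k + 1)|) := by
        gcongr
        exact abs_sqrtCoeff_le_four_mul_succ _
      _ = _ := by rw [← add_assoc]; ring

theorem summable_norm_pow_mul_sqrtCoeff {x : ℝ} (hx : |x| < 1) :
    Summable fun n => ‖x ^ n * sqrtCoeff n‖ := by
  refine Summable.of_nonneg_of_le (fun _ => norm_nonneg _) (fun n => ?_)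
    (summable_geometric_of_lt_one (abs_nonneg x) hx)
  rw [norm_mul, norm_pow, Real.norm_eq_abs, Real.norm_eq_abs]
  exact mul_le_of_le_one_right (by positivity) (abs_sqrtCoeff_le n)

theorem tsum_pow_mul_sqrtCoeff {x : ℝ} (h0 : 0 ≤ x) (hx : x < 1 / 2) :
    ∑' n, x ^ n * sqrtCoeff n = √(1 - x) := by
  have hx1 : |x| < 1 := by rw [abs_of_nonneg h0]; linarith
  have hs := summable_norm_pow_mul_sqrtCoeff hx1
  have hsq : (∑' n, x ^ n * sqrtCoeff n) ^ 2 = 1 - x := by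
    rw [sq, tsum_mul_tsum_eq_tsum_sum_antidiagonal_of_summable_norm hs hs]
    have hcoeff : ∀ n, ∑ p ∈ antidiagonal n,
        x ^ p.1 * sqrtCoeff p.1 * (x ^ p.2 * sqrtCoeff p.2) =
          x ^ n * PowerSeries.coeff n (1 - PowerSeries.X : PowerSeries ℝ) := by
      intro n
      rw [← sq_mk_sqrtCoeff, sq, PowerSeries.coeff_mul, mul_sum]
      refine sum_congr rfl fun p hp => ?_
      rw [← mem_antidiagonal.1 hp, PowerSeries.coeff_mk, PowerSeries.coeff_mk]
      ring
    simp_rw [hcoeff]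
    rw [tsum_eq_sum (s := range 2)]
    · simp [sum_range_succ, PowerSeries.coeff_one, PowerSeries.coeff_X]
      ring
    · intro n hn
      simp only [mem_range, not_lt] at hn
      simp [PowerSeries.coeff_one, PowerSeries.coeff_X, show n ≠ 0 by omega,
        show n ≠ 1 by omega]
  have hnonneg : 0 ≤ ∑' n, x ^ n * sqrtCoeff n := by
    have hgeo := hasSum_geometric_of_lt_one h0 (by linarith : x < 1)
    have htail : ‖∑' n, x ^ (n + 1) * sqrtCoeff (n + 1)‖ ≤ x / 2 * (1 - x)⁻¹ := by
      refine tsum_of_norm_bounded (hgeo.mul_left (x / 2)) fun n => ?_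
      rw [norm_mul, norm_pow, Real.norm_eq_abs, Real.norm_eq_abs, abs_of_nonneg h0]
      calc _ ≤ x ^ (n + 1) * (1 / 2) := by gcongr; exact abs_sqrtCoeff_succ_le n
        _ = _ := by ring
    rw [hs.of_norm.tsum_eq_zero_add]
    have := neg_le_of_abs_le htail
    have : x / 2 * (1 - x)⁻¹ ≤ 1 := by
      rw [← div_eq_mul_inv, div_le_one (by linarith)]; linarith
    simp only [pow_zero, one_mul, sqrtCoeff] at *
    linarith
  rw [← hsq, Real.sqrt_sq hnonneg]

theorem tendsto_centralBinom :
    Tendsto (fun n : ℕ => (n.centralBinom : ℝ) / 4 ^ n * √n) atTop (nhds (√π)⁻¹) := by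
  have h := Stirling.tendsto_stirlingSeq_sqrt_pi
  have h2 : Tendsto (fun n : ℕ => 2 * n) atTop atTop :=
    tendsto_id.const_mul_atTop' two_pos
  have hpi : √π ≠ 0 := by positivity
  have := (h.comp h2).div (h.pow 2) (by positivity)
  have hlim : √π / √π ^ 2 = (√π)⁻¹ := by field_simp
  rw [hlim] at this
  refine this.congr' ?_
  filter_upwards [eventually_gt_atTop 0] with n hn
  have hn' : (0 : ℝ) < n := by exact_mod_cast hn
  have hc : (n.centralBinom : ℝ) = (2 * n).factorial / (n.factorial * n.factorial) := by
    rw [Nat.centralBinom, Nat.choose_eq_factorial_div_factorial (by omega),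
      Nat.cast_div]
    · push_cast; congr 3; congr 1; omega
    · exact Nat.factorial_mul_factorial_dvd_factorial (by omega)
    · positivity
  simp only [Function.comp, Stirling.stirlingSeq, Pi.div_apply]
  rw [hc]
  push_cast
  have h4 : √(2 * (2 * (n : ℝ))) = 2 * √n := by
    rw [← mul_assoc, Real.sqrt_mul (by norm_num), show (2 * 2 : ℝ) = 2 ^ 2 by norm_num,
      Real.sqrt_sq (by norm_num)]
  have h2n : √(2 * (n : ℝ)) ^ 2 = 2 * n := Real.sq_sqrt (by positivity)
  have hsn : √(n : ℝ) ^ 2 = n := Real.sq_sqrt hn'.le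
  have hfac : (n.factorial : ℝ) ≠ 0 := by positivity
  have hs0 : √(n : ℝ) ≠ 0 := by positivity
  have hpow : (2 * (n : ℝ) / rexp 1) ^ (2 * n) = 4 ^ n * (((n : ℝ) / rexp 1) ^ n) ^ 2 := by
    rw [mul_div_assoc, mul_pow, pow_mul 2, ← pow_mul (_ / _), mul_comm n 2]
    norm_num
  have hE : ((n : ℝ) / rexp 1) ^ n ≠ 0 := by positivity
  rw [h4, hpow]
  generalize ((n : ℝ) / rexp 1) ^ n = E at hE
  rw [div_pow, mul_pow, h2n]
  field_simp
  rw [hsn]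

theorem tendsto_rpow_mul_sqrtCoeff :
    Tendsto (fun n : ℕ => (n : ℝ) ^ (3 / 2 : ℝ) * sqrtCoeff n) atTop
      (nhds (-(2 * √π)⁻¹)) := by
  rw [← tendsto_add_atTop_iff_nat 1]
  have h1 : Tendsto (fun n : ℕ => ((n : ℝ) + 1) / n) atTop (nhds 1) := by
    have := (tendsto_one_div_atTop_nhds_zero_nat (𝕜 := ℝ)).const_add 1
    rw [add_zero] at this
    refine this.congr' ?_
    filter_upwards [eventually_gt_atTop 0] with n hn
    have : (n : ℝ) ≠ 0 := by positivity
    field_simp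
  have h := (tendsto_centralBinom.mul h1.sqrt).mul_const (-(1 / 2))
  rw [Real.sqrt_one] at h
  convert h.congr' ?_ using 2
  · rw [mul_inv]; ring
  filter_upwards [eventually_gt_atTop 0] with n hn
  have hn' : (0 : ℝ) < n := by positivity
  have hc : (n.centralBinom : ℝ) = (n + 1) * catalan n := by
    exact_mod_cast (succ_mul_catalan_eq_centralBinom n).symm
  have hp : ((n : ℝ) + 1) ^ (3 / 2 : ℝ) = (n + 1) * √(n + 1) := by
    rw [show (3 / 2 : ℝ) = 1 + 1 / 2 by norm_num, Real.rpow_add (by positivity), Real.rpow_one,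
      Real.sqrt_eq_rpow]
  rw [sqrtCoeff, Nat.cast_succ, hp, hc, Real.sqrt_div (by positivity)]
  have : √(n : ℝ) ≠ 0 := by positivity
  field_simp

/-- The radius of convergence of the generating function of the separable permutations. -/
noncomputable def sepRadius : ℝ := 3 - 2 * √2

theorem sepRadius_pos : 0 < sepRadius := by
  have h : √2 ^ 2 = 2 := Real.sq_sqrt (by norm_num)
  rw [sepRadius]
  nlinarith [Real.sqrt_nonneg 2]

theorem inv_sepRadius : sepRadius⁻¹ = 3 + 2 * √2 := by
  have h : √2 ^ 2 = 2 := Real.sq_sqrt (by norm_num)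
  refine inv_eq_of_mul_eq_one_right ?_
  rw [sepRadius]
  linear_combination -4 * h

theorem four_mul_sepRadius_sq_lt_one : 4 * sepRadius ^ 2 < 1 := by
  have h : √2 ^ 2 = 2 := Real.sq_sqrt (by norm_num)
  have h1 : 1.4 ≤ √2 := Real.le_sqrt_of_sq_le (by norm_num)
  have h2 := sepRadius_pos
  have h3 : sepRadius ≤ 0.2 := by rw [sepRadius]; linarith
  nlinarith

theorem sqrt_one_sub_sepRadius_sq :
    √(1 - sepRadius ^ 2) = 2 * 2 ^ (1 / 4 : ℝ) * sepRadius ^ (1 / 2 : ℝ) := by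
  have h : √2 ^ 2 = 2 := Real.sq_sqrt (by norm_num)
  have h1 : 1 - sepRadius ^ 2 = 2 ^ 2 * √2 * sepRadius := by
    rw [sepRadius]; linear_combination 4 * h
  rw [h1, Real.sqrt_mul (by positivity), Real.sqrt_mul (by positivity),
    Real.sqrt_sq (by norm_num), Real.sqrt_eq_rpow 2, Real.sqrt_eq_rpow sepRadius,
    Real.sqrt_eq_rpow, ← Real.rpow_mul (by norm_num)]
  norm_num

open PowerSeries in
theorem genFun_SEP_eq :
    3 - X - 2 * PowerSeries.mk (fun n => (#(SEP n) : ℝ)) =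
      rescale sepRadius⁻¹ (PowerSeries.mk sqrtCoeff) *
        rescale sepRadius (PowerSeries.mk sqrtCoeff) := by
  have h0 := sepRadius_pos.ne'
  have hsq : (3 - X - 2 * PowerSeries.mk (fun n => (#(SEP n) : ℝ))) ^ 2 =
      (rescale sepRadius⁻¹ (PowerSeries.mk sqrtCoeff) *
        rescale sepRadius (PowerSeries.mk sqrtCoeff)) ^ 2 := by
    rw [sq_genFun_SEP, mul_pow, ← map_pow, ← map_pow, sq_mk_sqrtCoeff]
    simp only [map_sub, map_one, rescale_X]
    have h1 : (C sepRadius⁻¹ * C sepRadius : ℝ⟦X⟧) = 1 := by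
      rw [← map_mul, inv_mul_cancel₀ h0, map_one]
    have h2 : (C sepRadius⁻¹ + C sepRadius : ℝ⟦X⟧) = 6 := by
      rw [← map_add, inv_sepRadius, sepRadius, ← map_ofNat C 6]
      congr 1
      ring
    linear_combination X * h2 - X ^ 2 * h1
  refine (sq_eq_sq_iff_eq_or_eq_neg.1 hsq).resolve_right fun h => ?_
  have hc (r : ℝ) : constantCoeff (rescale r (PowerSeries.mk sqrtCoeff)) = 1 := by
    rw [← coeff_zero_eq_constantCoeff_apply, coeff_rescale, coeff_mk]
    simp [sqrtCoeff]
  have := congrArg constantCoeff h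
  simp only [map_neg, map_mul, map_sub, map_ofNat, constantCoeff_X, hc, constantCoeff_mk,
    card_SEP_of_le_one zero_le_one] at this
  norm_num at this

theorem sepRadius_pow_mul_card_SEP (n : ℕ) (hn : 2 ≤ n) :
    sepRadius ^ n * #(SEP n) =
      -(1 / 2) * ∑ k ∈ range (n + 1), (sepRadius ^ 2) ^ k * sqrtCoeff k * sqrtCoeff (n - k) := by
  have h0 := sepRadius_pos.ne'
  have h := congrArg (PowerSeries.coeff n) genFun_SEP_eq
  rw [mul_comm (PowerSeries.rescale _ _), PowerSeries.coeff_mul,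
    Nat.sum_antidiagonal_eq_sum_range_succ (fun i j =>
      PowerSeries.coeff i (PowerSeries.rescale sepRadius (PowerSeries.mk sqrtCoeff)) *
      PowerSeries.coeff j (PowerSeries.rescale sepRadius⁻¹ (PowerSeries.mk sqrtCoeff)))] at h
  have hl : PowerSeries.coeff n (3 - (PowerSeries.X : PowerSeries ℝ) -
      2 * PowerSeries.mk (fun n => (#(SEP n) : ℝ))) = -2 * (#(SEP n) : ℝ) := by
    rw [← map_ofNat PowerSeries.C 2, ← map_ofNat PowerSeries.C 3]
    simp [PowerSeries.coeff_X, PowerSeries.coeff_C, show n ≠ 0 by omega, show n ≠ 1 by omega]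
  rw [hl] at h
  have : (#(SEP n) : ℝ) = -(1 / 2) * (-2 * (#(SEP n) : ℝ)) := by ring
  rw [this, h, mul_left_comm, mul_sum]
  congr 1
  refine sum_congr rfl fun k hk => ?_
  obtain ⟨m, rfl⟩ := Nat.exists_eq_add_of_le (Nat.lt_succ_iff.1 (mem_range.1 hk))
  simp only [PowerSeries.coeff_rescale, PowerSeries.coeff_mk, Nat.add_sub_cancel_left, inv_pow]
  field_simp
  ring

theorem tendsto_rpow_mul_sqrtCoeff_sub (k : ℕ) :
    Tendsto (fun n : ℕ => (n : ℝ) ^ (3 / 2 : ℝ) * sqrtCoeff (n - k)) atTop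
      (nhds (-(2 * √π)⁻¹)) := by
  rw [← tendsto_add_atTop_iff_nat k]
  have h1 : Tendsto (fun n : ℕ => (1 + (k : ℝ) / n) ^ (3 / 2 : ℝ)) atTop (nhds 1) := by
    have := ((tendsto_const_div_atTop_nhds_zero_nat (k : ℝ)).const_add 1).rpow_const
      (p := 3 / 2) (.inr (by norm_num))
    simpa using this
  have h := h1.mul tendsto_rpow_mul_sqrtCoeff
  rw [one_mul] at h
  refine h.congr' ?_
  filter_upwards [eventually_gt_atTop 0] with n hn
  have hn' : (0 : ℝ) < n := by positivity
  rw [← mul_assoc, ← Real.mul_rpow (by positivity) (by positivity), Nat.add_sub_cancel]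
  congr 2
  push_cast
  field_simp

theorem exists_rpow_mul_abs_sqrtCoeff_sub_le :
    ∃ M, ∀ n k : ℕ, k ≤ n → (n : ℝ) ^ (3 / 2 : ℝ) * |sqrtCoeff (n - k)| ≤ M * 4 ^ k := by
  obtain ⟨M, hM⟩ := tendsto_rpow_mul_sqrtCoeff.abs.bddAbove_range
  refine ⟨M, fun n k hk => ?_⟩
  have h1 := abs_sqrtCoeff_le_four_pow_mul (n - k) k
  rw [Nat.sub_add_cancel hk] at h1
  have h2 : |(n : ℝ) ^ (3 / 2 : ℝ) * sqrtCoeff n| ≤ M := hM ⟨n, rfl⟩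
  rw [abs_mul, abs_of_nonneg (by positivity)] at h2
  calc _ ≤ (n : ℝ) ^ (3 / 2 : ℝ) * (4 ^ k * |sqrtCoeff n|) := by gcongr
    _ = (n : ℝ) ^ (3 / 2 : ℝ) * |sqrtCoeff n| * 4 ^ k := by ring
    _ ≤ _ := by gcongr

theorem tendsto_rpow_mul_sum_sqrtCoeff :
    Tendsto (fun n : ℕ => (n : ℝ) ^ (3 / 2 : ℝ) *
      ∑ k ∈ range (n + 1), (sepRadius ^ 2) ^ k * sqrtCoeff k * sqrtCoeff (n - k)) atTop
      (nhds (√(1 - sepRadius ^ 2) * -(2 * √π)⁻¹)) := by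
  obtain ⟨M, hM⟩ := exists_rpow_mul_abs_sqrtCoeff_sub_le
  have hM0 : 0 ≤ M := by
    simpa using (by positivity : (0 : ℝ) ≤ _).trans (hM 0 0 le_rfl)
  have hr := four_mul_sepRadius_sq_lt_one
  rw [← tsum_pow_mul_sqrtCoeff (by positivity) (by linarith), ← tsum_mul_right]
  have h := tendsto_tsum_of_dominated_convergence (𝓕 := atTop)
    (f := fun n k : ℕ => if k ≤ n then
      (sepRadius ^ 2) ^ k * sqrtCoeff k * ((n : ℝ) ^ (3 / 2 : ℝ) * sqrtCoeff (n - k)) else 0)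
    (g := fun k => (sepRadius ^ 2) ^ k * sqrtCoeff k * -(2 * √π)⁻¹)
    (bound := fun k => M * (4 * sepRadius ^ 2) ^ k)
    ((summable_geometric_of_lt_one (by positivity) hr).mul_left M) ?_ ?_
  · refine h.congr fun n => ?_
    rw [tsum_eq_sum (s := range (n + 1)), mul_sum]
    · refine sum_congr rfl fun k hk => ?_
      rw [if_pos (Nat.lt_succ_iff.1 (mem_range.1 hk))]
      ring
    · intro k hk
      exact if_neg (by simpa using hk)
  · intro k
    refine ((tendsto_rpow_mul_sqrtCoeff_sub k).const_mul _).congr' ?_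
    filter_upwards [eventually_ge_atTop k] with n hn
    rw [if_pos hn]
  · refine .of_forall fun n k => ?_
    by_cases hk : k ≤ n
    · rw [if_pos hk, norm_mul, norm_mul, norm_mul, norm_pow, norm_pow,
        Real.norm_of_nonneg sepRadius_pos.le,
        Real.norm_of_nonneg (r := (n : ℝ) ^ (3 / 2 : ℝ)) (by positivity),
        Real.norm_eq_abs, Real.norm_eq_abs]
      calc _ ≤ (sepRadius ^ 2) ^ k * 1 * (M * 4 ^ k) := by
            exact mul_le_mul (mul_le_mul_of_nonneg_left (abs_sqrtCoeff_le k) (by positivity))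
              (hM n k hk) (by positivity) (by positivity)
        _ = _ := by rw [mul_pow]; ring
    · rw [if_neg hk, norm_zero]
      positivity

/-- `sₙ ~ (1/(2^{3/4}√π)) (3 - 2√2)^{-n + 1/2} n^{-3/2}`. -/
theorem sep_card_asymp :
    Tendsto (fun n : ℕ => ((SEP n).card : ℝ) * (2 : ℝ) ^ ((3 : ℝ) / 4) * Real.sqrt π *
        (n : ℝ) ^ ((3 : ℝ) / 2) * (3 - 2 * Real.sqrt 2) ^ ((n : ℝ) - 1 / 2)) atTop
      (nhds 1) := by
  have hr := sepRadius_pos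
  have h := tendsto_rpow_mul_sum_sqrtCoeff.const_mul
    (-(1 / 2) * (2 : ℝ) ^ (3 / 4 : ℝ) * √π * sepRadius ^ (-(1 / 2) : ℝ))
  have h2 : (2 : ℝ) ^ (3 / 4 : ℝ) * 2 ^ (1 / 4 : ℝ) = 2 := by
    rw [← Real.rpow_add (by norm_num)]; norm_num
  have h3 : sepRadius ^ (-(1 / 2) : ℝ) * sepRadius ^ (1 / 2 : ℝ) = 1 := by
    rw [← Real.rpow_add hr]; norm_num
  have hlim : -(1 / 2) * (2 : ℝ) ^ (3 / 4 : ℝ) * √π * sepRadius ^ (-(1 / 2) : ℝ) *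
      (√(1 - sepRadius ^ 2) * -(2 * √π)⁻¹) = 1 := by
    have hpi : √π * (√π)⁻¹ = 1 := mul_inv_cancel₀ (by positivity)
    rw [sqrt_one_sub_sepRadius_sq, mul_inv]
    calc _ = 1 / 2 * (2 ^ (3 / 4 : ℝ) * 2 ^ (1 / 4 : ℝ)) * (√π * (√π)⁻¹) *
          (sepRadius ^ (-(1 / 2) : ℝ) * sepRadius ^ (1 / 2 : ℝ)) := by ring
      _ = 1 := by rw [h2, h3, hpi]; norm_num
  rw [hlim] at h
  refine h.congr' ?_
  filter_upwards [eventually_ge_atTop 2] with n hn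
  have hs := sepRadius_pow_mul_card_SEP n hn
  rw [← sepRadius, sub_eq_add_neg, Real.rpow_add hr, Real.rpow_natCast]
  linear_combination (-(2 : ℝ) ^ (3 / 4 : ℝ) * √π * sepRadius ^ (-(1 / 2) : ℝ) *
    (n : ℝ) ^ (3 / 2 : ℝ)) * hs
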